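/- Let p be an odd prime and let n ≥ 0. The number of similarity classes of nondegenerate anisotropic quadratic forms in 3 variables integral over ℤ_p whose discriminant ideal equals (pⁿ) is (n² + 4n + 3)/8 if n is odd, and (n² + 2n)/8 if n is even. (Via the correspondence between ternary forms and quaternion orders, this is the number of isomorphism classes of ℤ_p-orders with reduced discriminant (pⁿ) in the division quaternion algebra over ℚ_p.) -/

import Mathlib

/-- The Gram matrix `M_f` of a quadratic form `f` in `n` variables. -/
noncomputable def gramMatrix {R : Type*} [CommRing R] {n : ℕ}
    (f : QuadraticForm R (Fin n → R)) : Matrix (Fin n) (Fin n) R :=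
  Matrix.of fun i j => QuadraticMap.polar f (Pi.single i 1) (Pi.single j 1)

/-- The ideal generated by the coefficients `a_{ij}` of a quadratic form
`f = Σ_{i ≤ j} a_{ij} X_i X_j`. -/
noncomputable def coeffIdeal {R : Type*} [CommRing R] {n : ℕ}
    (f : QuadraticForm R (Fin n → R)) : Ideal R :=
  Ideal.span ((Set.range fun i => f (Pi.single i 1)) ∪
    (Set.range fun ij : Fin n × Fin n =>
      QuadraticMap.polar f (Pi.single ij.1 1) (Pi.single ij.2 1)))

/-- A quadratic form is primitive if the ideal generated by its coefficients is the whole ring. -/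
noncomputable def IsPrimitiveForm {R : Type*} [CommRing R] {n : ℕ}
    (f : QuadraticForm R (Fin n → R)) : Prop :=
  coeffIdeal f = ⊤

/-- Two quadratic forms are similar if a unit multiple of one is isometric to the other. -/
def SimilarForm {R : Type*} [CommRing R] {n : ℕ}
    (f g : QuadraticForm R (Fin n → R)) : Prop :=
  ∃ u : Rˣ, ((u : R) • f).Equivalent g


section Arith

variable {p : ℕ} [Fact p.Prime]

theorem isUnit_iff_tz (x : ℤ_[p]) : IsUnit x ↔ PadicInt.toZMod x ≠ 0 := by
  rw [← not_iff_not, not_not, ← RingHom.mem_ker, PadicInt.ker_toZMod,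
    IsLocalRing.mem_maximalIdeal, mem_nonunits_iff]

theorem tz_p : PadicInt.toZMod (p : ℤ_[p]) = 0 := by simp

theorem two_tz (hp : p ≠ 2) : (2 : ZMod p) ≠ 0 := by
  exact Ring.two_ne_zero (by rw [ZMod.ringChar_zmod_n]; exact hp)

theorem two_unit (hp : p ≠ 2) : IsUnit (2 : ℤ_[p]) := by
  rw [isUnit_iff_tz, map_ofNat]; exact two_tz hp

theorem sq_lift (hp : p ≠ 2) (r : ℤ_[p]) (a : ZMod p) (ha : a ≠ 0)
    (h : PadicInt.toZMod r = a ^ 2) : ∃ c : ℤ_[p], IsUnit c ∧ r = c ^ 2 := by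
  obtain ⟨x, hx⟩ := ZMod.ringHom_surjective (PadicInt.toZMod (p := p)) a
  have h1 : ‖(2 * x : ℤ_[p])‖ = 1 := by
    rw [← PadicInt.isUnit_iff, isUnit_iff_tz, map_mul, hx, map_ofNat]
    exact mul_ne_zero (two_tz hp) ha
  have h2 : ‖x ^ 2 - r‖ < 1 := by
    rw [← PadicInt.mem_nonunits, mem_nonunits_iff, isUnit_iff_tz, not_not]
    simp [hx, h]
  obtain ⟨z, hz, -⟩ := hensels_lemma (p := p) (R := ℤ_[p])
    (F := Polynomial.X ^ 2 - Polynomial.C r) (a := x) (by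
      have h3 : ‖(1 + 1 : ℤ_[p])‖ * ‖x‖ = 1 := by rw [one_add_one_eq_two, ← norm_mul, h1]
      simpa [h3] using h2)
  have hz' : z ^ 2 = r := by
    simp at hz; linear_combination hz
  refine ⟨z, ?_, hz'.symm⟩
  rw [isUnit_iff_tz]
  intro h0
  rw [← hz', map_pow, h0] at h
  exact ha (by simpa using h.symm)

/-- quadratic character of the residue -/
noncomputable def chi (r : ℤ_[p]) : ℤ := quadraticChar (ZMod p) (PadicInt.toZMod r)

theorem chi_mul (r s : ℤ_[p]) : chi (r * s) = chi r * chi s := by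
  rw [chi, map_mul, map_mul]; rfl

theorem chi_unit {r : ℤ_[p]} (h : IsUnit r) : chi r = 1 ∨ chi r = -1 :=
  quadraticChar_dichotomy ((isUnit_iff_tz r).1 h)

theorem chi_sq {r : ℤ_[p]} (h : IsUnit r) : chi r * chi r = 1 := by
  rcases chi_unit h with h | h <;> simp [h]

theorem chi_one_sq (hp : p ≠ 2) {r : ℤ_[p]} (h : chi r = 1) :
    ∃ c : ℤ_[p], IsUnit c ∧ r = c ^ 2 := by
  have h0 : PadicInt.toZMod r ≠ 0 := by
    intro h0; simp [chi, h0] at h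
  obtain ⟨a, ha⟩ := (quadraticChar_one_iff_isSquare h0).1 h
  refine sq_lift hp r a ?_ (by rw [ha, sq])
  rintro rfl
  simp [ha] at h0

theorem chi_eq (hp : p ≠ 2) {r s : ℤ_[p]} (hs : IsUnit s) (h : chi r = chi s) :
    ∃ c : ℤ_[p], IsUnit c ∧ r = s * c ^ 2 := by
  obtain ⟨c, hc, hc'⟩ := chi_one_sq hp (r := r * s) (by rw [chi_mul, h, chi_sq hs])
  obtain ⟨s, rfl⟩ := hs
  refine ⟨c * (s⁻¹ : ℤ_[p]ˣ), hc.mul (Units.isUnit _), ?_⟩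
  have := s.mul_inv
  calc r = r * (s * (s⁻¹ : ℤ_[p]ˣ)) ^ 2 := by rw [this]; ring
    _ = (r * s) * (s * (s⁻¹ : ℤ_[p]ˣ) ^ 2) := by ring
    _ = _ := by rw [hc']; ring

theorem exists_chi_neg (hp : p ≠ 2) : ∃ r : ℤ_[p], chi r = -1 := by
  obtain ⟨a, ha⟩ := quadraticChar_exists_neg_one (F := ZMod p)
    (by rw [ZMod.ringChar_zmod_n]; exact hp)
  obtain ⟨x, hx⟩ := ZMod.ringHom_surjective (PadicInt.toZMod (p := p)) a
  exact ⟨x, by rw [chi, hx, ha]⟩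

theorem unit_of_chi {r : ℤ_[p]} (h : chi r = -1) : IsUnit r := by
  rw [isUnit_iff_tz]; intro h0; simp [chi, h0] at h

/-- a binary unimodular form represents every unit -/
theorem bin_rep (hp : p ≠ 2) {u v t : ℤ_[p]} (hu : IsUnit u) (hv : IsUnit v) (ht : IsUnit t) :
    ∃ x y : ℤ_[p], u * x ^ 2 + v * y ^ 2 = t := by
  have hu' := (isUnit_iff_tz u).1 hu
  have hv' := (isUnit_iff_tz v).1 hv
  have ht' := (isUnit_iff_tz t).1 ht
  obtain ⟨a, b, hab⟩ := FiniteField.exists_root_sum_quadratic (R := ZMod p)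
    (f := Polynomial.C (PadicInt.toZMod u) * Polynomial.X ^ 2 + Polynomial.C 0 * Polynomial.X
      + Polynomial.C 0)
    (g := Polynomial.C (PadicInt.toZMod v) * Polynomial.X ^ 2 + Polynomial.C 0 * Polynomial.X
      + Polynomial.C (- PadicInt.toZMod t))
    (Polynomial.degree_quadratic hu') (Polynomial.degree_quadratic hv')
    (by rw [ZMod.card]; exact (Fact.out : p.Prime).eq_two_or_odd.resolve_left hp)
  obtain ⟨x, rfl⟩ := ZMod.ringHom_surjective (PadicInt.toZMod (p := p)) a
  obtain ⟨y, rfl⟩ := ZMod.ringHom_surjective (PadicInt.toZMod (p := p)) b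
  have h1 : PadicInt.toZMod (u * x ^ 2 + v * y ^ 2) = PadicInt.toZMod t := by
    simp at hab
    simp only [map_add, map_mul, map_pow]
    linear_combination hab
  have h2 : IsUnit (u * x ^ 2 + v * y ^ 2) := by rw [isUnit_iff_tz, h1]; exact ht'
  obtain ⟨c, -, hc⟩ := chi_eq hp (r := t) h2 (by rw [chi, chi, h1])
  exact ⟨x * c, y * c, by linear_combination -hc⟩

theorem p_ne : (p : ℤ_[p]) ≠ 0 := by
  exact_mod_cast (Fact.out : p.Prime).ne_zero

theorem unit_pow {x : ℤ_[p]} (hx : x ≠ 0) : ∃ (m : ℕ) (r : ℤ_[p]), IsUnit r ∧ x = p ^ m * r :=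
  ⟨_, _, (PadicInt.unitCoeff hx).isUnit, by rw [mul_comm]; exact PadicInt.unitCoeff_spec hx⟩

theorem tz_p_mul {k : ℕ} (hk : 0 < k) (x : ℤ_[p]) : PadicInt.toZMod ((p : ℤ_[p]) ^ k * x) = 0 := by
  rw [map_mul, map_pow, tz_p, zero_pow hk.ne', zero_mul]

theorem pow_uniq_le {m k : ℕ} {r s : ℤ_[p]} (hr : IsUnit r)
    (h : (p : ℤ_[p]) ^ m * r = p ^ k * s) : k ≤ m := by
  by_contra hlt
  push Not at hlt
  obtain ⟨d, rfl⟩ := Nat.exists_eq_add_of_lt hlt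
  have : r = (p : ℤ_[p]) ^ (d + 1) * s := by
    apply mul_left_cancel₀ (pow_ne_zero m (p_ne (p := p)))
    rw [h]; ring
  rw [isUnit_iff_tz, this, tz_p_mul (by omega)] at hr
  exact hr rfl

theorem pow_uniq {m k : ℕ} {r s : ℤ_[p]} (hr : IsUnit r) (hs : IsUnit s)
    (h : (p : ℤ_[p]) ^ m * r = p ^ k * s) : m = k ∧ r = s := by
  have : m = k := le_antisymm (pow_uniq_le hs h.symm) (pow_uniq_le hr h)
  subst this
  exact ⟨rfl, mul_left_cancel₀ (pow_ne_zero m (p_ne (p := p))) h⟩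

/-- the norm form of the unramified quadratic extension -/
theorem norm_form {ε : ℤ_[p]} (hε : chi ε = -1) {X Y : ℤ_[p]} (h : ¬ (X = 0 ∧ Y = 0)) :
    ∃ (m : ℕ) (X' Y' : ℤ_[p]), X = p ^ m * X' ∧ Y = p ^ m * Y' ∧ IsUnit (X' ^ 2 - ε * Y' ^ 2) := by
  have key : ∀ X Y : ℤ_[p], (IsUnit X ∨ IsUnit Y) → IsUnit (X ^ 2 - ε * Y ^ 2) := by
    intro X Y h
    simp only [isUnit_iff_tz] at h ⊢
    intro h0
    simp only [map_sub, map_mul, map_pow] at h0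
    rw [chi, quadraticChar_neg_one_iff_not_isSquare] at hε
    by_cases hY : PadicInt.toZMod Y = 0
    · simp [hY] at h0 h; exact h h0
    · apply hε
      refine ⟨PadicInt.toZMod X / PadicInt.toZMod Y, ?_⟩
      field_simp
      linear_combination -h0
  by_cases hX : X = 0
  · have hY : Y ≠ 0 := fun hY => h ⟨hX, hY⟩
    obtain ⟨m, r, hr, rfl⟩ := unit_pow hY
    exact ⟨m, 0, r, by simp [hX], rfl, key _ _ (Or.inr hr)⟩
  by_cases hY : Y = 0
  · obtain ⟨m, r, hr, rfl⟩ := unit_pow hX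
    exact ⟨m, r, 0, rfl, by simp [hY], key _ _ (Or.inl hr)⟩
  obtain ⟨m, r, hr, rfl⟩ := unit_pow hX
  obtain ⟨k, s, hs, rfl⟩ := unit_pow hY
  rcases le_total m k with hmk | hmk
  · obtain ⟨d, rfl⟩ := Nat.exists_eq_add_of_le hmk
    exact ⟨m, r, p ^ d * s, rfl, by ring, key _ _ (Or.inl hr)⟩
  · obtain ⟨d, rfl⟩ := Nat.exists_eq_add_of_le hmk
    exact ⟨k, p ^ d * r, s, by ring, rfl, key _ _ (Or.inr hs)⟩

theorem chi_add_p {k : ℕ} (hk : 0 < k) (r x : ℤ_[p]) : chi (r + (p : ℤ_[p]) ^ k * x) = chi r := by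
  rw [chi, map_add, tz_p_mul hk, add_zero, chi]

theorem unit_add_p {k : ℕ} (hk : 0 < k) {r : ℤ_[p]} (hr : IsUnit r) (x : ℤ_[p]) :
    IsUnit (r + (p : ℤ_[p]) ^ k * x) := by
  rw [isUnit_iff_tz] at *
  rwa [map_add, tz_p_mul hk, add_zero]

theorem chi_mul_sq {r c : ℤ_[p]} (hc : IsUnit c) : chi (r * c ^ 2) = chi r := by
  rw [sq, chi_mul, chi_mul, chi_sq hc, mul_one]

theorem value_lemma {ε : ℤ_[p]} (hε : chi ε = -1) {e e' f : ℕ} (hee : e ≤ e')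
    (hpar : e % 2 = e' % 2) (hf : f % 2 ≠ e % 2) {w : ℤ_[p]} (hw : IsUnit w)
    {x y z : ℤ_[p]} (h : ¬ (x = 0 ∧ y = 0 ∧ z = 0)) :
    ∃ (m : ℕ) (r : ℤ_[p]), IsUnit r ∧
      p ^ e * x ^ 2 - ε * p ^ e' * y ^ 2 + w * p ^ f * z ^ 2 = p ^ m * r ∧
      ((m % 2 = e % 2 ∧ e ≤ m ∧ (m = e → e < e' → chi r = 1)) ∨
       (m % 2 = f % 2 ∧ f ≤ m ∧ chi r = chi w)) := by
  obtain ⟨k, rfl⟩ : ∃ k, e' = e + 2 * k := ⟨(e' - e) / 2, by omega⟩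
  by_cases hxy : x = 0 ∧ y = 0
  · obtain ⟨rfl, rfl⟩ := hxy
    have hz : z ≠ 0 := by simpa using h
    obtain ⟨l, c, hc, rfl⟩ := unit_pow hz
    exact ⟨f + 2 * l, w * c ^ 2, hw.mul (hc.pow 2), by ring,
      Or.inr ⟨by omega, by omega, chi_mul_sq hc⟩⟩
  obtain ⟨m, X, Y, rfl, hY, hu⟩ := norm_form hε (X := x) (Y := p ^ k * y) (by
    rintro ⟨h1, h2⟩
    exact hxy ⟨h1, (mul_eq_zero.1 h2).resolve_left (pow_ne_zero k p_ne)⟩)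
  have hval : ∀ z : ℤ_[p], (p : ℤ_[p]) ^ e * (p ^ m * X) ^ 2 - ε * p ^ (e + 2 * k) * y ^ 2
      + z = p ^ (e + 2 * m) * (X ^ 2 - ε * Y ^ 2) + z := by
    intro z
    calc _ = (p : ℤ_[p]) ^ e * (p ^ m * X) ^ 2 - ε * p ^ e * (p ^ k * y) ^ 2 + z := by ring
      _ = _ := by rw [hY]; ring
  have hchi : e + 2 * m = e → e < e + 2 * k → chi (X ^ 2 - ε * Y ^ 2) = 1 := by
    intro h1 h2
    have hm : m = 0 := by omega
    subst hm
    have : Y = p ^ k * y := by rw [hY]; ring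
    have h3 : X ^ 2 - ε * Y ^ 2 = X ^ 2 + p ^ k * (- ε * y * Y) := by rw [this]; ring
    rw [h3] at hu ⊢
    have hX : IsUnit X := by
      have := unit_add_p (k := k) (by omega) hu (ε * y * Y)
      rw [show X ^ 2 + (p : ℤ_[p]) ^ k * (-ε * y * Y) + p ^ k * (ε * y * Y) = X ^ 2 by ring] at this
      exact (isUnit_pow_iff two_ne_zero).1 this
    rw [chi_add_p (k := k) (by omega), sq, chi_mul, chi_sq hX]
  rw [hval]
  by_cases hz : z = 0
  · subst hz
    exact ⟨e + 2 * m, _, hu, by ring, Or.inl ⟨by omega, by omega, hchi⟩⟩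
  obtain ⟨l, c, hc, rfl⟩ := unit_pow hz
  rcases lt_trichotomy (e + 2 * m) (f + 2 * l) with hlt | heq | hlt
  · obtain ⟨d, hd⟩ := Nat.exists_eq_add_of_lt hlt
    refine ⟨e + 2 * m, X ^ 2 - ε * Y ^ 2 + p ^ (d + 1) * (w * c ^ 2), unit_add_p (by omega) hu _,
      ?_, Or.inl ⟨by omega, by omega, ?_⟩⟩
    · calc _ = (p : ℤ_[p]) ^ (e + 2 * m) * (X ^ 2 - ε * Y ^ 2) + p ^ (f + 2 * l) * (w * c ^ 2) := by
            ring
        _ = _ := by rw [hd]; ring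
    · intro h1 h2
      rw [chi_add_p (k := d + 1) (by omega), hchi h1 h2]
  · omega
  · obtain ⟨d, hd⟩ := Nat.exists_eq_add_of_lt hlt
    refine ⟨f + 2 * l, w * c ^ 2 + p ^ (d + 1) * (X ^ 2 - ε * Y ^ 2),
      unit_add_p (by omega) (hw.mul (hc.pow 2)) _, ?_, Or.inr ⟨by omega, by omega, ?_⟩⟩
    · calc _ = (p : ℤ_[p]) ^ (e + 2 * m) * (X ^ 2 - ε * Y ^ 2) + p ^ (f + 2 * l) * (w * c ^ 2) := by
            ring
        _ = _ := by rw [hd]; ring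
    · rw [chi_add_p (k := d + 1) (by omega), chi_mul_sq hc]

end Arith

section Forms

variable {p : ℕ} [Fact p.Prime]

theorem diagz (hp : p ≠ 2) (n : ℕ) : ∀ (M : Type) [AddCommGroup M] [Module ℤ_[p] M]
    (_ : Module.Basis (Fin n) ℤ_[p] M) (Q : QuadraticForm ℤ_[p] M),
    ∃ v : Module.Basis (Fin n) ℤ_[p] M, ∀ i j, i ≠ j → QuadraticMap.polar Q (v i) (v j) = 0 := by
  induction n with
  | zero => intro M _ _ b Q; exact ⟨b, fun i => i.elim0⟩
  | succ n ih =>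
    intro M _ _ b Q
    classical
    by_cases hQ : ∀ x, Q x = 0
    · exact ⟨b, fun i j _ => by simp [QuadraticMap.polar, hQ]⟩
    push Not at hQ
    have hex : ∃ m : ℕ, ∃ x r, IsUnit r ∧ Q x = (p : ℤ_[p]) ^ m * r := by
      obtain ⟨x, hx⟩ := hQ
      obtain ⟨m, r, h1, h2⟩ := unit_pow hx
      exact ⟨m, x, r, h1, h2⟩
    obtain ⟨x, r, hr, hx⟩ := Nat.find_spec hex
    have hmin : ∀ m, (∃ x r, IsUnit r ∧ Q x = (p : ℤ_[p]) ^ m * r) → Nat.find hex ≤ m :=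
      fun m hm => Nat.find_min' hex hm
    generalize Nat.find hex = m at hx hmin
    have hx0 : Q x ≠ 0 := by rw [hx]; exact mul_ne_zero (pow_ne_zero m p_ne) hr.ne_zero
    have hdvd : ∀ y, Q x ∣ Q y := by
      intro y
      by_cases hy : Q y = 0
      · simp [hy]
      obtain ⟨k, s, hs, hk⟩ := unit_pow hy
      rw [hx, hk, IsUnit.dvd_mul_right hs, IsUnit.mul_right_dvd hr]
      exact pow_dvd_pow _ (hmin k ⟨y, s, hs, hk⟩)
    have h2 := two_unit hp
    have hxx : QuadraticMap.polar Q x x = 2 * Q x := by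
      rw [QuadraticMap.polar_self]; simp
    have hpol : ∀ y, 2 * Q x ∣ QuadraticMap.polar Q x y := by
      intro y
      rw [IsUnit.mul_left_dvd h2]
      exact dvd_sub (dvd_sub (hdvd _) (hdvd _)) (hdvd _)
    let N : Submodule ℤ_[p] M := LinearMap.ker (Q.polarBilin x)
    have hN : ∀ y, y ∈ N ↔ QuadraticMap.polar Q x y = 0 := by
      intro y; simp [N, LinearMap.mem_ker]
    have hli : ∀ (c : ℤ_[p]), ∀ y ∈ N, c • x + y = 0 → c = 0 := by
      intro c y hy h
      have h3 : Q.polarBilin x (c • x + y) = 0 := by rw [h, map_zero]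
      rw [map_add, map_smul, QuadraticMap.polarBilin_apply_apply,
        QuadraticMap.polarBilin_apply_apply, (hN y).1 hy, hxx, add_zero, smul_eq_mul] at h3
      exact (mul_eq_zero.1 h3).resolve_right (mul_ne_zero h2.ne_zero hx0)
    have hsp : ∀ z : M, ∃ c : ℤ_[p], z + c • x ∈ N := by
      intro z
      obtain ⟨d, hd⟩ := hpol z
      refine ⟨-d, ?_⟩
      change Q.polarBilin x _ = 0
      rw [map_add, map_smul, QuadraticMap.polarBilin_apply_apply,
        QuadraticMap.polarBilin_apply_apply, hxx, hd, smul_eq_mul]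
      ring
    obtain ⟨k, bN⟩ := Submodule.basisOfPid b N
    have hk : k = n := by
      have := Fintype.card_congr ((Module.Basis.mkFinCons x bN hli hsp).indexEquiv b)
      simpa using this
    subst hk
    obtain ⟨v, hv⟩ := ih N bN (Q.comp N.subtype)
    refine ⟨Module.Basis.mkFinCons x v hli hsp, ?_⟩
    rw [Module.Basis.coe_mkFinCons]
    intro i j
    refine Fin.cases ?_ (fun i => ?_) i <;> refine Fin.cases ?_ (fun j => ?_) j
    · simp
    · intro _; exact (hN _).1 (v j).2
    · intro _
      rw [QuadraticMap.polar_comm]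
      exact (hN _).1 (v i).2
    · intro hij
      exact hv i j (fun h => hij (by rw [h]))

/-- diagonal ternary form -/
noncomputable def D3 (a b c : ℤ_[p]) : QuadraticForm ℤ_[p] (Fin 3 → ℤ_[p]) :=
  QuadraticMap.weightedSumSquares ℤ_[p] ![a, b, c]

theorem D3_apply (a b c : ℤ_[p]) (v : Fin 3 → ℤ_[p]) :
    D3 a b c v = a * v 0 ^ 2 + b * v 1 ^ 2 + c * v 2 ^ 2 := by
  simp [D3, QuadraticMap.weightedSumSquares_apply, Fin.sum_univ_three, sq]

theorem exists_D3 (hp : p ≠ 2) (f : QuadraticForm ℤ_[p] (Fin 3 → ℤ_[p])) :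
    ∃ a b c, f.Equivalent (D3 a b c) := by
  obtain ⟨v, hv⟩ := diagz hp 3 _ (Pi.basisFun ℤ_[p] (Fin 3)) f
  refine ⟨f (v 0), f (v 1), f (v 2), ?_⟩
  let _ : Invertible (2 : ℤ_[p]) := (two_unit hp).invertible
  have h := QuadraticMap.basisRepr_eq_of_iIsOrtho f v (by
    intro i j hij
    simp [Function.onFun, QuadraticMap.associated_apply]
    right
    simpa [QuadraticMap.polar] using hv i j hij)
  have h2 : D3 (f (v 0)) (f (v 1)) (f (v 2)) = f.basisRepr v := by
    rw [h, D3]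
    congr 1
    ext i; fin_cases i <;> rfl
  rw [h2]
  exact ⟨f.isometryEquivBasisRepr v⟩

theorem gram_eq (f : QuadraticForm ℤ_[p] (Fin 3 → ℤ_[p])) :
    gramMatrix f = LinearMap.toMatrix₂' ℤ_[p] f.polarBilin := by
  ext i j
  simp [gramMatrix, LinearMap.toMatrix₂'_apply]

theorem gram_D3 (a b c : ℤ_[p]) : (gramMatrix (D3 a b c)).det = 8 * (a * b * c) := by
  rw [Matrix.det_fin_three]
  simp [gramMatrix, QuadraticMap.polar, D3_apply, Pi.single_apply]
  ring

theorem gram_equiv {f g : QuadraticForm ℤ_[p] (Fin 3 → ℤ_[p])} (h : f.Equivalent g) :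
    (gramMatrix g).det ∣ (gramMatrix f).det := by
  obtain ⟨φ⟩ := h
  have hfg : f = g.comp φ.toLinearEquiv.toLinearMap := by
    ext x; exact (φ.map_app x).symm
  have h2 : f.polarBilin = g.polarBilin.compl₁₂ φ.toLinearEquiv.toLinearMap
      φ.toLinearEquiv.toLinearMap := by
    conv_lhs => rw [hfg]
    rw [QuadraticMap.polarBilin_comp]
  rw [gram_eq, gram_eq, h2, LinearMap.toMatrix₂'_compl₁₂, Matrix.det_mul, Matrix.det_mul]
  exact (Dvd.intro_left _ rfl).mul_right _

theorem gram_assoc {f g : QuadraticForm ℤ_[p] (Fin 3 → ℤ_[p])} (h : f.Equivalent g) :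
    Associated (gramMatrix f).det (gramMatrix g).det :=
  associated_of_dvd_dvd (gram_equiv h.symm) (gram_equiv h)

theorem aniso_equiv {f g : QuadraticForm ℤ_[p] (Fin 3 → ℤ_[p])} (h : f.Equivalent g)
    (hf : f.Anisotropic) : g.Anisotropic := by
  obtain ⟨φ⟩ := h.symm
  intro x hx
  rw [← φ.map_app] at hx
  have := hf _ hx
  exact φ.toLinearEquiv.map_eq_zero_iff.1 this

theorem SF_refl (f : QuadraticForm ℤ_[p] (Fin 3 → ℤ_[p])) : SimilarForm f f :=
  ⟨1, by simpa using QuadraticMap.Equivalent.refl f⟩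

theorem equiv_smul {f g : QuadraticForm ℤ_[p] (Fin 3 → ℤ_[p])} (u : ℤ_[p]) (h : f.Equivalent g) :
    (u • f).Equivalent (u • g) := by
  obtain ⟨φ⟩ := h
  exact ⟨⟨φ.toLinearEquiv, fun x => by
    have := φ.map_app x
    simp only [smul_apply]
    exact congrArg (u • ·) this⟩⟩

theorem SF_symm {f g : QuadraticForm ℤ_[p] (Fin 3 → ℤ_[p])} (h : SimilarForm f g) :
    SimilarForm g f := by
  obtain ⟨u, h⟩ := h
  refine ⟨u⁻¹, ?_⟩
  have := equiv_smul ((u⁻¹ : ℤ_[p]ˣ) : ℤ_[p]) h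
  rw [smul_smul, Units.inv_mul, one_smul] at this
  exact this.symm

theorem SF_trans {f g k : QuadraticForm ℤ_[p] (Fin 3 → ℤ_[p])} (h : SimilarForm f g)
    (h' : SimilarForm g k) : SimilarForm f k := by
  obtain ⟨u, h⟩ := h
  obtain ⟨v, h'⟩ := h'
  refine ⟨v * u, ?_⟩
  have := equiv_smul (v : ℤ_[p]) h
  rw [smul_smul] at this
  exact this.trans h'

theorem SF_equiv {f g : QuadraticForm ℤ_[p] (Fin 3 → ℤ_[p])} (h : f.Equivalent g) :
    SimilarForm f g := ⟨1, by simpa using h⟩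

theorem SF_scale {a b c u : ℤ_[p]} (hu : IsUnit u) :
    SimilarForm (D3 a b c) (D3 (u * a) (u * b) (u * c)) := by
  obtain ⟨u, rfl⟩ := hu
  refine ⟨u, ?_⟩
  have : (u : ℤ_[p]) • D3 a b c = D3 ((u : ℤ_[p]) * a) ((u : ℤ_[p]) * b) ((u : ℤ_[p]) * c) := by
    ext x
    simp only [smul_apply, D3_apply, smul_eq_mul]
    ring
  rw [this]

theorem D3_swap01 (a b c : ℤ_[p]) : (D3 a b c).Equivalent (D3 b a c) :=
  ⟨⟨LinearEquiv.funCongrLeft ℤ_[p] ℤ_[p] (Equiv.swap 0 1), fun x => by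
    simp [D3_apply, LinearMap.funLeft_apply, Equiv.swap_apply_def]; ring⟩⟩

theorem D3_swap12 (a b c : ℤ_[p]) : (D3 a b c).Equivalent (D3 a c b) :=
  ⟨⟨LinearEquiv.funCongrLeft ℤ_[p] ℤ_[p] (Equiv.swap 1 2), fun x => by
    simp [D3_apply, LinearMap.funLeft_apply, Equiv.swap_apply_def]; ring⟩⟩

theorem D3_sq {a b c x y z : ℤ_[p]} (hx : IsUnit x) (hy : IsUnit y) (hz : IsUnit z) :
    (D3 (a * x ^ 2) (b * y ^ 2) (c * z ^ 2)).Equivalent (D3 a b c) := by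
  obtain ⟨x, rfl⟩ := hx
  obtain ⟨y, rfl⟩ := hy
  obtain ⟨z, rfl⟩ := hz
  exact ⟨QuadraticForm.isometryEquivWeightedSumSquaresWeightedSumSquares ![x, y, z] (by
    intro i; fin_cases i <;> simp)⟩

theorem D3_twist {a c ε x y : ℤ_[p]} (h : IsUnit (x ^ 2 - ε * y ^ 2)) :
    (D3 (a * (x ^ 2 - ε * y ^ 2)) (-ε * a * (x ^ 2 - ε * y ^ 2)) c).Equivalent
      (D3 a (-ε * a) c) := by
  obtain ⟨r, hr⟩ := h
  have hi := r.mul_inv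
  generalize ((r⁻¹ : ℤ_[p]ˣ) : ℤ_[p]) = s at hi
  rw [hr] at hi
  refine ⟨⟨⟨⟨⟨fun v => ![x * v 0 + ε * y * v 1, y * v 0 + x * v 1, v 2], ?_⟩, ?_⟩,
    fun v => ![s * (x * v 0 - ε * y * v 1), s * (x * v 1 - y * v 0), v 2], ?_, ?_⟩, ?_⟩⟩
  · intro v w; ext i; fin_cases i <;> simp <;> ring
  · intro k v; ext i; fin_cases i <;> simp <;> ring
  · intro v; ext i; fin_cases i <;> simp
    · linear_combination v 0 * hi
    · linear_combination v 1 * hi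
  · intro v; ext i; fin_cases i <;> simp
    · linear_combination v 0 * hi
    · linear_combination v 1 * hi
  · intro v
    simp [D3_apply]
    ring

end Forms

section Classify

variable {p : ℕ} [Fact p.Prime]

theorem vec_ne (x y z : ℤ_[p]) (h : ¬ (x = 0 ∧ y = 0 ∧ z = 0)) : ![x, y, z] ≠ 0 := by
  intro h0
  apply h
  exact ⟨by simpa using congrFun h0 0, by simpa using congrFun h0 1, by simpa using congrFun h0 2⟩

theorem not_aniso {a b c x y z : ℤ_[p]} (h : a * x ^ 2 + b * y ^ 2 + c * z ^ 2 = 0)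
    (h0 : ¬ (x = 0 ∧ y = 0 ∧ z = 0)) : ¬ (D3 a b c).Anisotropic := by
  intro hA
  exact vec_ne x y z h0 (hA _ (by rw [D3_apply]; simpa using h))

theorem iso_pair (hp : p ≠ 2) {a b : ℕ} {u v c : ℤ_[p]} (hu : IsUnit u)
    (hab : a % 2 = b % 2) (h : chi (-(u * v)) = 1) :
    ¬ (D3 ((p : ℤ_[p]) ^ a * u) ((p : ℤ_[p]) ^ b * v) c).Anisotropic := by
  obtain ⟨s, hs, hs'⟩ := chi_one_sq hp h
  obtain ⟨k, hk⟩ : ∃ k, a + b = 2 * k := ⟨(a + b) / 2, by omega⟩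
  refine not_aniso (x := (p : ℤ_[p]) ^ k * s) (y := (p : ℤ_[p]) ^ a * u) (z := 0) ?_ ?_
  · calc _ = (p : ℤ_[p]) ^ a * u * ((p : ℤ_[p]) ^ (2 * k) * s ^ 2) + (p : ℤ_[p]) ^ (a + b) * (p : ℤ_[p]) ^ a * v * u ^ 2 := by ring
      _ = 0 := by rw [← hs', hk]; ring
  · rintro ⟨h1, -⟩
    exact mul_ne_zero (pow_ne_zero k p_ne) hs.ne_zero h1

theorem iso_all (hp : p ≠ 2) {a b c : ℕ} {u v w : ℤ_[p]} (hu : IsUnit u) (hv : IsUnit v)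
    (hw : IsUnit w) (hab : a % 2 = b % 2) (hac : a % 2 = c % 2) :
    ¬ (D3 ((p : ℤ_[p]) ^ a * u) ((p : ℤ_[p]) ^ b * v) ((p : ℤ_[p]) ^ c * w)).Anisotropic := by
  obtain ⟨x, y, hxy⟩ := bin_rep hp hu hv hw.neg
  obtain ⟨k, hk⟩ : ∃ k, b + c = 2 * k := ⟨(b + c) / 2, by omega⟩
  obtain ⟨l, hl⟩ : ∃ l, a + c = 2 * l := ⟨(a + c) / 2, by omega⟩
  obtain ⟨m, hm⟩ : ∃ m, a + b = 2 * m := ⟨(a + b) / 2, by omega⟩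
  refine not_aniso (x := (p : ℤ_[p]) ^ k * x) (y := (p : ℤ_[p]) ^ l * y) (z := (p : ℤ_[p]) ^ m) ?_ ?_
  · calc _ = (p : ℤ_[p]) ^ (a + 2 * k) * u * x ^ 2 + (p : ℤ_[p]) ^ (b + 2 * l) * v * y ^ 2
          + (p : ℤ_[p]) ^ (c + 2 * m) * w := by ring
      _ = (p : ℤ_[p]) ^ (a + b + c) * (u * x ^ 2 + v * y ^ 2 + w) := by
        rw [← hk, ← hl, ← hm]; ring
      _ = 0 := by rw [hxy]; ring
  · rintro ⟨-, -, h1⟩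
    exact pow_ne_zero m p_ne h1

/-- the normal forms -/
noncomputable def NF (ε : ℤ_[p]) (e e' f : ℕ) (w : ℤ_[p]) :
    QuadraticForm ℤ_[p] (Fin 3 → ℤ_[p]) := D3 ((p : ℤ_[p]) ^ e) (-ε * (p : ℤ_[p]) ^ e') (w * (p : ℤ_[p]) ^ f)

theorem NF_apply (ε : ℤ_[p]) (e e' f : ℕ) (w : ℤ_[p]) (v : Fin 3 → ℤ_[p]) :
    NF ε e e' f w v = (p : ℤ_[p]) ^ e * v 0 ^ 2 - ε * (p : ℤ_[p]) ^ e' * v 1 ^ 2 + w * (p : ℤ_[p]) ^ f * v 2 ^ 2 := by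
  rw [NF, D3_apply]; ring

theorem NF_value {ε : ℤ_[p]} (hε : chi ε = -1) {e e' f : ℕ} (hee : e ≤ e')
    (hpar : e % 2 = e' % 2) (hf : f % 2 ≠ e % 2) {w : ℤ_[p]} (hw : IsUnit w)
    {v : Fin 3 → ℤ_[p]} (h : v ≠ 0) :
    ∃ (m : ℕ) (r : ℤ_[p]), IsUnit r ∧ NF ε e e' f w v = (p : ℤ_[p]) ^ m * r ∧
      ((m % 2 = e % 2 ∧ e ≤ m ∧ (m = e → e < e' → chi r = 1)) ∨
       (m % 2 = f % 2 ∧ f ≤ m ∧ chi r = chi w)) := by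
  rw [NF_apply]
  refine value_lemma hε hee hpar hf hw ?_
  rintro ⟨h0, h1, h2⟩
  apply h
  ext i
  fin_cases i <;> simp [h0, h1, h2]

theorem NF_aniso {ε : ℤ_[p]} (hε : chi ε = -1) {e e' f : ℕ} (hee : e ≤ e')
    (hpar : e % 2 = e' % 2) (hf : f % 2 ≠ e % 2) {w : ℤ_[p]} (hw : IsUnit w) :
    (NF ε e e' f w).Anisotropic := by
  intro v hv
  by_contra h
  obtain ⟨m, r, hr, h1, -⟩ := NF_value hε hee hpar hf hw h
  rw [hv] at h1
  exact mul_ne_zero (pow_ne_zero m p_ne) hr.ne_zero h1.symm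

theorem NF_one_side {ε : ℤ_[p]} (hε : chi ε = -1) {e₁ e₁' f₁ e₂ e₂' f₂ : ℕ} {w₁ w₂ : ℤ_[p]}
    (hw₁ : IsUnit w₁) (hw₂ : IsUnit w₂)
    (hee₂ : e₂ ≤ e₂') (hpar₂ : e₂ % 2 = e₂' % 2) (hf₂ : f₂ % 2 ≠ e₂ % 2)
    (hf : f₁ % 2 = f₂ % 2) (he : e₁ % 2 = e₂ % 2) (s : ℤ_[p]ˣ)
    (h : ((s : ℤ_[p]) • NF ε e₁ e₁' f₁ w₁).Equivalent (NF ε e₂ e₂' f₂ w₂)) :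
    f₂ ≤ f₁ ∧ e₂ ≤ e₁ ∧ chi ((s : ℤ_[p]) * w₁) = chi w₂ ∧
      (e₁ = e₂ → e₂ < e₂' → chi (s : ℤ_[p]) = 1) := by
  obtain ⟨φ⟩ := h
  have hval : ∀ v : Fin 3 → ℤ_[p], v ≠ 0 → ∃ (m : ℕ) (r : ℤ_[p]), IsUnit r ∧
      (s : ℤ_[p]) * NF ε e₁ e₁' f₁ w₁ v = (p : ℤ_[p]) ^ m * r ∧
      ((m % 2 = e₂ % 2 ∧ e₂ ≤ m ∧ (m = e₂ → e₂ < e₂' → chi r = 1)) ∨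
       (m % 2 = f₂ % 2 ∧ f₂ ≤ m ∧ chi r = chi w₂)) := by
    intro v hv
    obtain ⟨m, r, hr, h1, h2⟩ := NF_value hε hee₂ hpar₂ hf₂ hw₂ (v := φ v) (by
      intro h0; exact hv (φ.toLinearEquiv.map_eq_zero_iff.1 h0))
    refine ⟨m, r, hr, ?_, h2⟩
    rw [← h1, φ.map_app]
    simp
  obtain ⟨m, r, hr, h1, h2⟩ := hval ![0, 0, 1] (vec_ne _ _ _ (by simp))
  obtain ⟨m', r', hr', h1', h2'⟩ := hval ![1, 0, 0] (vec_ne _ _ _ (by simp))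
  simp [NF_apply] at h1 h1'
  obtain ⟨rfl, rfl⟩ := pow_uniq (m := f₁) (r := (s : ℤ_[p]) * w₁) (s.isUnit.mul hw₁) hr (by rw [← h1]; ring)
  obtain ⟨rfl, rfl⟩ := pow_uniq (m := e₁) (r := s) s.isUnit hr' (by rw [← h1']; ring)
  rcases h2 with h2 | h2
  · omega
  rcases h2' with h2' | h2'
  · exact ⟨h2.2.1, h2'.2.1, h2.2.2, h2'.2.2⟩
  · omega

theorem NF_inj {ε : ℤ_[p]} (hε : chi ε = -1) {e₁ e₁' f₁ e₂ e₂' f₂ : ℕ} {w₁ w₂ : ℤ_[p]}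
    (hw₁ : IsUnit w₁) (hw₂ : IsUnit w₂)
    (hee₁ : e₁ ≤ e₁') (hpar₁ : e₁ % 2 = e₁' % 2) (hf₁ : f₁ % 2 ≠ e₁ % 2)
    (hee₂ : e₂ ≤ e₂') (hpar₂ : e₂ % 2 = e₂' % 2) (hf₂ : f₂ % 2 ≠ e₂ % 2)
    (hf : f₁ % 2 = f₂ % 2) (he : e₁ % 2 = e₂ % 2)
    (h : SimilarForm (NF ε e₁ e₁' f₁ w₁) (NF ε e₂ e₂' f₂ w₂)) :
    f₁ = f₂ ∧ e₁ = e₂ ∧ (e₂ < e₂' → chi w₁ = chi w₂) := by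
  obtain ⟨t, ht⟩ := SF_symm h
  obtain ⟨s, hs⟩ := h
  obtain ⟨a1, a2, a3, a4⟩ := NF_one_side hε hw₁ hw₂ hee₂ hpar₂ hf₂ hf he s hs
  obtain ⟨b1, b2, -, -⟩ := NF_one_side hε hw₂ hw₁ hee₁ hpar₁ hf₁ hf.symm he.symm t ht
  have he' : e₁ = e₂ := le_antisymm b2 a2
  refine ⟨le_antisymm b1 a1, he', fun hlt => ?_⟩
  rw [← a3, chi_mul, a4 he' hlt, one_mul]

theorem classify1 (hp : p ≠ 2) {ε : ℤ_[p]} (hε : chi ε = -1) {a b c : ℕ} {u v w : ℤ_[p]}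
    (hu : IsUnit u) (hv : IsUnit v) (hw : IsUnit w) (hab : a ≤ b) (hpar : a % 2 = b % 2)
    (hA : (D3 ((p : ℤ_[p]) ^ a * u) ((p : ℤ_[p]) ^ b * v) ((p : ℤ_[p]) ^ c * w)).Anisotropic) :
    c % 2 ≠ a % 2 ∧ ∃ w', (w' = 1 ∨ (w' = ε ∧ a < b)) ∧
      SimilarForm (D3 ((p : ℤ_[p]) ^ a * u) ((p : ℤ_[p]) ^ b * v) ((p : ℤ_[p]) ^ c * w)) (NF ε a b c w') := by
  refine ⟨fun h => iso_all hp hu hv hw hpar h.symm hA, ?_⟩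
  have hεu := unit_of_chi hε
  have h1 : chi (-(u * v)) = -1 :=
    (chi_unit (hu.mul hv).neg).resolve_left (fun h => iso_pair hp hu hpar h hA)
  obtain ⟨s, hs, hs'⟩ := chi_eq hp (r := -(u * v)) hεu (h1.trans hε.symm)
  -- every third coefficient with the same character is allowed
  have key : ∀ w', IsUnit w' → chi (u * w) = chi w' →
      SimilarForm (D3 ((p : ℤ_[p]) ^ a * u) ((p : ℤ_[p]) ^ b * v) ((p : ℤ_[p]) ^ c * w)) (NF ε a b c w') := by
    intro w' hw' hchi
    obtain ⟨d, hd, hd'⟩ := chi_eq hp (r := u * w) hw' hchi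
    have h2 := SF_scale (a := (p : ℤ_[p]) ^ a * u) (b := (p : ℤ_[p]) ^ b * v) (c := (p : ℤ_[p]) ^ c * w) hu
    refine SF_trans h2 ?_
    have h3 := D3_sq (a := (p : ℤ_[p]) ^ a) (b := -ε * (p : ℤ_[p]) ^ b) (c := w' * (p : ℤ_[p]) ^ c) hu hs hd
    rw [show u * ((p : ℤ_[p]) ^ a * u) = (p : ℤ_[p]) ^ a * u ^ 2 by ring,
      show u * ((p : ℤ_[p]) ^ b * v) = -ε * (p : ℤ_[p]) ^ b * s ^ 2 by
        linear_combination (-(p : ℤ_[p]) ^ b) * hs',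
      show u * ((p : ℤ_[p]) ^ c * w) = w' * (p : ℤ_[p]) ^ c * d ^ 2 by
        linear_combination ((p : ℤ_[p]) ^ c) * hd']
    exact SF_equiv h3
  rcases chi_unit (hu.mul hw) with h2 | h2
  · exact ⟨1, Or.inl rfl, key 1 isUnit_one (by rw [h2]; simp [chi])⟩
  · have h3 := key ε hεu (by rw [h2, hε])
    rcases hab.lt_or_eq with hlt | rfl
    · exact ⟨ε, Or.inr ⟨rfl, hlt⟩, h3⟩
    refine ⟨1, Or.inl rfl, SF_trans h3 ?_⟩
    obtain ⟨x, y, hxy⟩ := bin_rep hp (u := 1) (v := -ε) isUnit_one hεu.neg hεu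
    have hxy' : x ^ 2 - ε * y ^ 2 = ε := by linear_combination hxy
    have h4 := SF_scale (a := (p : ℤ_[p]) ^ a) (b := -ε * (p : ℤ_[p]) ^ a) (c := ε * (p : ℤ_[p]) ^ c) hεu
    refine SF_trans h4 ?_
    have h5 := D3_twist (a := (p : ℤ_[p]) ^ a) (c := 1 * (p : ℤ_[p]) ^ c * ε ^ 2) (ε := ε) (x := x) (y := y)
      (by rw [hxy']; exact hεu)
    rw [hxy'] at h5
    have h6 := D3_sq (a := (p : ℤ_[p]) ^ a) (b := -ε * (p : ℤ_[p]) ^ a) (c := 1 * (p : ℤ_[p]) ^ c)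
      isUnit_one isUnit_one hεu
    rw [one_pow, mul_one, mul_one] at h6
    rw [show ε * (p : ℤ_[p]) ^ a = (p : ℤ_[p]) ^ a * ε by ring,
      show ε * (-ε * (p : ℤ_[p]) ^ a) = -ε * (p : ℤ_[p]) ^ a * ε by ring,
      show ε * (ε * (p : ℤ_[p]) ^ c) = 1 * (p : ℤ_[p]) ^ c * ε ^ 2 by ring]
    exact SF_equiv (h5.trans h6)

theorem classify2 (hp : p ≠ 2) {ε : ℤ_[p]} (hε : chi ε = -1) {a b c : ℕ} {u v w : ℤ_[p]}
    (hu : IsUnit u) (hv : IsUnit v) (hw : IsUnit w) (hpar : a % 2 = b % 2)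
    (hA : (D3 ((p : ℤ_[p]) ^ a * u) ((p : ℤ_[p]) ^ b * v) ((p : ℤ_[p]) ^ c * w)).Anisotropic) :
    ∃ e e' f w', e ≤ e' ∧ e % 2 = e' % 2 ∧ f % 2 ≠ e % 2 ∧ e + e' + f = a + b + c ∧
      (w' = 1 ∨ (w' = ε ∧ e < e')) ∧
      SimilarForm (D3 ((p : ℤ_[p]) ^ a * u) ((p : ℤ_[p]) ^ b * v) ((p : ℤ_[p]) ^ c * w)) (NF ε e e' f w') := by
  rcases le_total a b with hab | hab
  · obtain ⟨h1, w', h2, h3⟩ := classify1 hp hε hu hv hw hab hpar hA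
    exact ⟨a, b, c, w', hab, hpar, h1, rfl, h2, h3⟩
  · have hsw := D3_swap01 ((p : ℤ_[p]) ^ a * u) ((p : ℤ_[p]) ^ b * v) ((p : ℤ_[p]) ^ c * w)
    obtain ⟨h1, w', h2, h3⟩ := classify1 hp hε hv hu hw hab hpar.symm (aniso_equiv hsw hA)
    exact ⟨b, a, c, w', hab, hpar.symm, h1, by omega, h2, SF_trans (SF_equiv hsw) h3⟩

theorem classify (hp : p ≠ 2) {ε : ℤ_[p]} (hε : chi ε = -1) {a b c : ℕ} {u v w : ℤ_[p]}
    (hu : IsUnit u) (hv : IsUnit v) (hw : IsUnit w)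
    (hA : (D3 ((p : ℤ_[p]) ^ a * u) ((p : ℤ_[p]) ^ b * v) ((p : ℤ_[p]) ^ c * w)).Anisotropic) :
    ∃ e e' f w', e ≤ e' ∧ e % 2 = e' % 2 ∧ f % 2 ≠ e % 2 ∧ e + e' + f = a + b + c ∧
      (w' = 1 ∨ (w' = ε ∧ e < e')) ∧
      SimilarForm (D3 ((p : ℤ_[p]) ^ a * u) ((p : ℤ_[p]) ^ b * v) ((p : ℤ_[p]) ^ c * w)) (NF ε e e' f w') := by
  by_cases hab : a % 2 = b % 2
  · exact classify2 hp hε hu hv hw hab hA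
  have hs := D3_swap12 ((p : ℤ_[p]) ^ a * u) ((p : ℤ_[p]) ^ b * v) ((p : ℤ_[p]) ^ c * w)
  by_cases hac : a % 2 = c % 2
  · obtain ⟨e, e', f, w', h1, h2, h3, h4, h5, h6⟩ :=
      classify2 hp hε hu hw hv hac (aniso_equiv hs hA)
    exact ⟨e, e', f, w', h1, h2, h3, by omega, h5, SF_trans (SF_equiv hs) h6⟩
  · have hs2 := hs.trans (D3_swap01 _ _ _)
    have hs3 := hs2.trans (D3_swap12 _ _ _)
    obtain ⟨e, e', f, w', h1, h2, h3, h4, h5, h6⟩ :=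
      classify2 hp hε hw hv hu (by omega) (aniso_equiv hs3 hA)
    exact ⟨e, e', f, w', h1, h2, h3, by omega, h5, SF_trans (SF_equiv hs3) h6⟩

theorem gram_NF (ε : ℤ_[p]) (e e' f : ℕ) (w : ℤ_[p]) :
    (gramMatrix (NF ε e e' f w)).det = (p : ℤ_[p]) ^ (e + e' + f) * (2 ^ 3 * (-ε * w)) := by
  rw [NF, gram_D3]; ring

theorem form_classify (hp : p ≠ 2) {ε : ℤ_[p]} (hε : chi ε = -1) {n : ℕ}
    {f : QuadraticForm ℤ_[p] (Fin 3 → ℤ_[p])}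
    (h0 : (gramMatrix f).det ≠ 0) (hA : f.Anisotropic)
    (hn : Ideal.span {(gramMatrix f).det} = Ideal.span {(p : ℤ_[p]) ^ n}) :
    ∃ e e' k w', e ≤ e' ∧ e % 2 = e' % 2 ∧ k % 2 ≠ e % 2 ∧ e + e' + k = n ∧
      (w' = 1 ∨ (w' = ε ∧ e < e')) ∧ SimilarForm f (NF ε e e' k w') := by
  obtain ⟨a, b, c, h⟩ := exists_D3 hp f
  have hassoc := (gram_assoc h).symm.trans (Ideal.span_singleton_eq_span_singleton.1 hn)
  have h8 := (gram_assoc h).ne_zero_iff.1 h0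
  rw [gram_D3] at hassoc h8
  have ha : a ≠ 0 := by rintro rfl; simp at h8
  have hb : b ≠ 0 := by rintro rfl; simp at h8
  have hc : c ≠ 0 := by rintro rfl; simp at h8
  obtain ⟨i, u, hu, rfl⟩ := unit_pow ha
  obtain ⟨j, v, hv, rfl⟩ := unit_pow hb
  obtain ⟨k, w, hw, rfl⟩ := unit_pow hc
  obtain ⟨t, ht⟩ := hassoc
  have hsum := (pow_uniq (m := i + j + k) (k := n) (r := 2 ^ 3 * (u * v * w * (t : ℤ_[p]))) (s := 1)
    (((two_unit hp).pow 3).mul (((hu.mul hv).mul hw).mul t.isUnit)) isUnit_one (by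
      rw [mul_one, ← ht]; ring)).1
  obtain ⟨e, e', f, w', h1, h2, h3, h4, h5, h6⟩ := classify hp hε hu hv hw (aniso_equiv h hA)
  exact ⟨e, e', f, w', h1, h2, h3, by omega, h5, SF_trans (SF_equiv h) h6⟩

theorem card_T (N : ℕ) : Nat.card {q : ℕ × ℕ // q.1 + q.2 < N} = N * (N + 1) / 2 := by
  let E : {q : ℕ × ℕ // q.1 + q.2 < N} ≃ (Σ k : Fin N, Fin (k.1 + 1)) :=
    { toFun := fun q => ⟨⟨q.1.1 + q.1.2, q.2⟩, ⟨q.1.1, by simp⟩⟩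
      invFun := fun s => ⟨(s.2.1, s.1.1 - s.2.1), by
        have h1 := s.1.2
        have h2 := s.2.2
        simp only
        omega⟩
      left_inv := by
        rintro ⟨⟨a, b⟩, h⟩
        simp
      right_inv := by
        rintro ⟨⟨k, hk⟩, ⟨i, hi⟩⟩
        simp only at hi
        have h : i + (k - i) = k := by omega
        simp only [Sigma.mk.injEq, Fin.mk.injEq]
        refine ⟨h, ?_⟩
        rw [Fin.heq_ext_iff (by omega)] }
  rw [Nat.card_congr E, Nat.card_sigma]
  simp only [Nat.card_eq_fintype_card, Fintype.card_fin]
  rw [Fin.sum_univ_eq_sum_range (fun k => k + 1) N]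
  have := Finset.sum_range_id_mul_two (N + 1)
  rw [Finset.sum_range_succ'] at this
  simp only [add_zero, Nat.add_sub_cancel] at this
  rw [mul_comm N, ← this, Nat.mul_div_cancel _ (by norm_num)]

end Classify

section Final

variable {p : ℕ} [Fact p.Prime]

/-- first exponent of the pair -/
def eA (n : ℕ) (q : ℕ × ℕ) : ℕ := 2 * q.1 + (n + 1) % 2

/-- second exponent of the pair -/
def eB (n : ℕ) (q : ℕ × ℕ) : ℕ := 2 * q.2 + (n + 1) % 2

open Classical in
/-- the representative attached to an index -/
noncomputable def rep (ε : ℤ_[p]) (n : ℕ) (q : ℕ × ℕ) : QuadraticForm ℤ_[p] (Fin 3 → ℤ_[p]) :=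
  NF ε (min (eA n q) (eB n q)) (max (eA n q) (eB n q)) (n - eA n q - eB n q)
    (if eA n q ≤ eB n q then 1 else ε)

theorem rep_facts (n : ℕ) (q : ℕ × ℕ) (h : q.1 + q.2 < (n + 1) / 2) :
    min (eA n q) (eB n q) ≤ max (eA n q) (eB n q) ∧
    min (eA n q) (eB n q) % 2 = max (eA n q) (eB n q) % 2 ∧
    (n - eA n q - eB n q) % 2 ≠ min (eA n q) (eB n q) % 2 ∧
    min (eA n q) (eB n q) + max (eA n q) (eB n q) + (n - eA n q - eB n q) = n := by
  simp only [eA, eB]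
  omega

theorem rep_par (n : ℕ) (q : ℕ × ℕ) (h : q.1 + q.2 < (n + 1) / 2) :
    min (eA n q) (eB n q) % 2 = (n + 1) % 2 ∧ (n - eA n q - eB n q) % 2 = n % 2 ∧
    eA n q + eB n q ≤ n := by
  simp only [eA, eB]
  omega

theorem nat_aux {n A B A' B' : ℕ} (h1 : A + B ≤ n) (h2 : A' + B' ≤ n)
    (hs : n - A - B = n - A' - B') (hm : min A B = min A' B')
    (hc : A' = B' ∨ (A ≤ B ↔ A' ≤ B')) : A = A' ∧ B = B' := by
  omega

theorem rep_mem (hp : p ≠ 2) {ε : ℤ_[p]} (hε : chi ε = -1) (n : ℕ) (q : ℕ × ℕ)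
    (h : q.1 + q.2 < (n + 1) / 2) :
    (gramMatrix (rep ε n q)).det ≠ 0 ∧ (rep ε n q).Anisotropic ∧
      Ideal.span {(gramMatrix (rep ε n q)).det} = Ideal.span {(p : ℤ_[p]) ^ n} := by
  obtain ⟨h1, h2, h3, h4⟩ := rep_facts n q h
  have hεu := unit_of_chi hε
  have hw : IsUnit (if eA n q ≤ eB n q then 1 else ε) := by
    split_ifs
    · exact isUnit_one
    · exact hεu
  have hu := ((two_unit hp).pow 3).mul (hεu.neg.mul hw)
  unfold rep
  rw [gram_NF, h4]
  refine ⟨mul_ne_zero (pow_ne_zero _ p_ne) hu.ne_zero, NF_aniso hε h1 h2 h3 hw, ?_⟩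
  exact Ideal.span_singleton_mul_right_unit hu _

theorem rep_inj {ε : ℤ_[p]} (hε : chi ε = -1) (n : ℕ) (q q' : ℕ × ℕ)
    (h : q.1 + q.2 < (n + 1) / 2) (h' : q'.1 + q'.2 < (n + 1) / 2)
    (hs : SimilarForm (rep ε n q) (rep ε n q')) : q = q' := by
  obtain ⟨h1, h2, h3, h4⟩ := rep_facts n q h
  obtain ⟨h1', h2', h3', h4'⟩ := rep_facts n q' h'
  have hεu := unit_of_chi hε
  have hw : ∀ q, IsUnit (if eA n q ≤ eB n q then 1 else ε) := by
    intro q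
    split_ifs
    · exact isUnit_one
    · exact hεu
  obtain ⟨a1, a2, a3⟩ := NF_inj hε (hw q) (hw q') h1 h2 h3 h1' h2' h3'
    ((rep_par n q h).2.1.trans (rep_par n q' h').2.1.symm)
    ((rep_par n q h).1.trans (rep_par n q' h').1.symm) hs
  have hone : chi (1 : ℤ_[p]) = 1 := by simp [chi]
  have hcase : eA n q' = eB n q' ∨ (eA n q ≤ eB n q ↔ eA n q' ≤ eB n q') := by
    by_cases hlt : min (eA n q') (eB n q') < max (eA n q') (eB n q')
    · right
      have := a3 hlt
      split_ifs at this with c1 c2 c2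
      · exact ⟨fun _ => c2, fun _ => c1⟩
      · rw [hone, hε] at this; norm_num at this
      · rw [hone, hε] at this; norm_num at this
      · exact ⟨fun h => absurd h c1, fun h => absurd h c2⟩
    · left
      rw [not_lt] at hlt
      exact le_antisymm (le_trans (le_max_left _ _) (hlt.trans (min_le_right _ _)))
        (le_trans (le_max_right _ _) (hlt.trans (min_le_left _ _)))
  obtain ⟨b1, b2⟩ := nat_aux (rep_par n q h).2.2 (rep_par n q' h').2.2 a1 a2 hcase
  simp only [eA, eB] at b1 b2
  exact Prod.ext (by omega) (by omega)

theorem rep_surj (hp : p ≠ 2) {ε : ℤ_[p]} (hε : chi ε = -1) (n : ℕ)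
    {f : QuadraticForm ℤ_[p] (Fin 3 → ℤ_[p])}
    (h0 : (gramMatrix f).det ≠ 0) (hA : f.Anisotropic)
    (hn : Ideal.span {(gramMatrix f).det} = Ideal.span {(p : ℤ_[p]) ^ n}) :
    ∃ q : ℕ × ℕ, q.1 + q.2 < (n + 1) / 2 ∧ SimilarForm (rep ε n q) f := by
  obtain ⟨e, e', k, w, h1, h2, h3, h4, h5, h6⟩ := form_classify hp hε h0 hA hn
  rcases h5 with rfl | ⟨rfl, hlt⟩
  · refine ⟨(e / 2, e' / 2), by simp only; omega, ?_⟩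
    have ha : eA n (e / 2, e' / 2) = e := by simp only [eA]; omega
    have hb : eB n (e / 2, e' / 2) = e' := by simp only [eB]; omega
    have hk : n - e - e' = k := by omega
    rw [rep, ha, hb, hk, min_eq_left h1, max_eq_right h1, if_pos h1]
    exact SF_symm h6
  · refine ⟨(e' / 2, e / 2), by simp only; omega, ?_⟩
    have ha : eA n (e' / 2, e / 2) = e' := by simp only [eA]; omega
    have hb : eB n (e' / 2, e / 2) = e := by simp only [eB]; omega
    have hk : n - e' - e = k := by omega
    rw [rep, ha, hb, hk, min_eq_right h1, max_eq_left h1, if_neg (by omega)]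
    exact SF_symm h6

theorem formula (n : ℕ) : (n + 1) / 2 * ((n + 1) / 2 + 1) / 2 =
    if Odd n then (n ^ 2 + 4 * n + 3) / 8 else (n ^ 2 + 2 * n) / 8 := by
  split_ifs with h
  · obtain ⟨k, rfl⟩ := h
    rw [show (2 * k + 1 + 1) / 2 = k + 1 by omega,
      show (2 * k + 1) ^ 2 + 4 * (2 * k + 1) + 3 = 4 * ((k + 1) * (k + 1 + 1)) by ring]
    omega
  · obtain ⟨k, rfl⟩ := Nat.not_odd_iff_even.1 h
    rw [show (k + k + 1) / 2 = k by omega,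
      show (k + k) ^ 2 + 2 * (k + k) = 4 * (k * (k + 1)) by ring]
    omega

end Final

theorem stmt_17 (p : ℕ) [Fact p.Prime] (hp : p ≠ 2) (n : ℕ) :
    Nat.card (Quot (fun (f g : {f : QuadraticForm ℤ_[p] (Fin 3 → ℤ_[p]) //
        (gramMatrix f).det ≠ 0 ∧ f.Anisotropic ∧
          Ideal.span {(gramMatrix f).det} = Ideal.span {(p : ℤ_[p]) ^ n}}) =>
      SimilarForm f.1 g.1)) =
      if Odd n then (n ^ 2 + 4 * n + 3) / 8 else (n ^ 2 + 2 * n) / 8 := by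
  obtain ⟨ε, hε⟩ := exists_chi_neg (p := p) hp
  rw [← formula, ← card_T]
  symm
  refine Nat.card_congr (Equiv.ofBijective
    (fun q => Quot.mk _ ⟨rep ε n q.1, rep_mem hp hε n q.1 q.2⟩) ⟨?_, ?_⟩)
  · rintro ⟨q, hq⟩ ⟨q', hq'⟩ h
    have h2 := Quot.eqvGen_exact h
    have h3 := (Equivalence.eqvGen_iff (r := fun (f g : {f : QuadraticForm ℤ_[p] (Fin 3 → ℤ_[p]) //
        (gramMatrix f).det ≠ 0 ∧ f.Anisotropic ∧
          Ideal.span {(gramMatrix f).det} = Ideal.span {(p : ℤ_[p]) ^ n}}) =>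
      SimilarForm f.1 g.1) ⟨fun f => SF_refl f.1, fun h => SF_symm h,
        fun h h' => SF_trans h h'⟩).1 h2
    exact Subtype.ext (rep_inj hε n q q' hq hq' h3)
  · intro c
    induction c using Quot.ind with
    | mk f =>
      obtain ⟨f, h0, hA, hn⟩ := f
      obtain ⟨q, hq, hs⟩ := rep_surj hp hε n h0 hA hn
      exact ⟨⟨q, hq⟩, Quot.sound hs⟩
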